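/- Let ω : ℝ → ℝ be a differentiable function and define the vector field U on ℝ² by U(x) = ω(x₁² + x₂²)·(x₂, −x₁). Then for all x ∈ ℝ²: (i) div U(x) = ∂₁u₁(x) + ∂₂u₂(x) = 0, and (ii) the convective derivative satisfies ((U·∇)U)(x) = (u₁∂₁u₁ + u₂∂₂u₁, u₁∂₁u₂ + u₂∂₂u₂)(x) = −ω(x₁² + x₂²)²·(x₁, x₂). -/

import Mathlib

/-!
Write `U = f W`, where `W(x, y) = (y, -x)` generates the rotations of the plane. The product rules
`div (f W) = f div W + (W·∇)f` and `(fW·∇)(f W) = f² (W·∇)W + f ((W·∇)f) W`, together with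
`div W = 0` and `(W·∇)W = -(x, y)`, reduce everything to `(W·∇)f = 0`. This holds for a radial `f`,
because `W` is tangent to the circles `x² + y² = const`.
-/

section PlanarFields

variable {𝕜 : Type*} [NontriviallyNormedField 𝕜]

/-- Existence of both partial derivatives of a function of two variables at `(x, y)`. -/
structure HasPartialDerivsAt (f : 𝕜 → 𝕜 → 𝕜) (x y : 𝕜) : Prop where
  fst : DifferentiableAt 𝕜 (fun s => f s y) x
  snd : DifferentiableAt 𝕜 (fun s => f x s) y

/-- The divergence `∂₁u + ∂₂v` of the planar vector field `(u, v)`. -/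
noncomputable def planarDivergence (u v : 𝕜 → 𝕜 → 𝕜) (x y : 𝕜) : 𝕜 :=
  deriv (fun s => u s y) x + deriv (fun s => v x s) y

/-- The derivative `u ∂₁g + v ∂₂g` of a scalar function `g` along the planar vector field
`(u, v)`; the self-advection of `(u, v)` is obtained with `g = u` and `g = v`. -/
noncomputable def convectiveDeriv (u v g : 𝕜 → 𝕜 → 𝕜) (x y : 𝕜) : 𝕜 :=
  u x y * deriv (fun s => g s y) x + v x y * deriv (fun s => g x s) y

variable {f g u v : 𝕜 → 𝕜 → 𝕜} {x y : 𝕜}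

theorem planarDivergence_mul (hf : HasPartialDerivsAt f x y)
    (hu : DifferentiableAt 𝕜 (fun s => u s y) x) (hv : DifferentiableAt 𝕜 (fun s => v x s) y) :
    planarDivergence (fun x y => f x y * u x y) (fun x y => f x y * v x y) x y =
      f x y * planarDivergence u v x y + convectiveDeriv u v f x y := by
  simp only [planarDivergence, convectiveDeriv]
  rw [deriv_fun_mul hf.fst hu, deriv_fun_mul hf.snd hv]
  ring

theorem convectiveDeriv_mul (hf : HasPartialDerivsAt f x y) (hg : HasPartialDerivsAt g x y) :
    convectiveDeriv u v (fun x y => f x y * g x y) x y =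
      convectiveDeriv u v f x y * g x y + f x y * convectiveDeriv u v g x y := by
  simp only [convectiveDeriv]
  rw [deriv_fun_mul hf.fst hg.fst, deriv_fun_mul hf.snd hg.snd]
  ring

theorem convectiveDeriv_mul_field (f u v g : 𝕜 → 𝕜 → 𝕜) (x y : 𝕜) :
    convectiveDeriv (fun x y => f x y * u x y) (fun x y => f x y * v x y) g x y =
      f x y * convectiveDeriv u v g x y := by
  simp only [convectiveDeriv]
  ring

theorem convectiveDeriv_mul_field_mul_of_eq_zero (hf : HasPartialDerivsAt f x y)
    (hg : HasPartialDerivsAt g x y) (hfuv : convectiveDeriv u v f x y = 0) :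
    convectiveDeriv (fun x y => f x y * u x y) (fun x y => f x y * v x y)
        (fun x y => f x y * g x y) x y =
      f x y ^ 2 * convectiveDeriv u v g x y := by
  rw [convectiveDeriv_mul_field, convectiveDeriv_mul hf hg, hfuv]
  ring

theorem hasDerivAt_comp_sq_add {ω : 𝕜 → 𝕜} {c : 𝕜} (hω : DifferentiableAt 𝕜 ω (x ^ 2 + c)) :
    HasDerivAt (fun s => ω (s ^ 2 + c)) (deriv ω (x ^ 2 + c) * (2 * x)) x := by
  have hsq : HasDerivAt (fun s : 𝕜 => s ^ 2 + c) (2 * x) x := by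
    simpa using (hasDerivAt_pow 2 x).add_const c
  exact hω.hasDerivAt.comp x hsq

theorem hasDerivAt_comp_add_sq {ω : 𝕜 → 𝕜} {c : 𝕜} (hω : DifferentiableAt 𝕜 ω (c + y ^ 2)) :
    HasDerivAt (fun s => ω (c + s ^ 2)) (deriv ω (c + y ^ 2) * (2 * y)) y := by
  simp only [add_comm c] at hω ⊢
  exact hasDerivAt_comp_sq_add hω

theorem hasPartialDerivsAt_radial {ω : 𝕜 → 𝕜} (hω : DifferentiableAt 𝕜 ω (x ^ 2 + y ^ 2)) :
    HasPartialDerivsAt (fun x y => ω (x ^ 2 + y ^ 2)) x y :=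
  ⟨(hasDerivAt_comp_sq_add hω).differentiableAt, (hasDerivAt_comp_add_sq hω).differentiableAt⟩

theorem convectiveDeriv_rotation_radial {ω : 𝕜 → 𝕜}
    (hω : DifferentiableAt 𝕜 ω (x ^ 2 + y ^ 2)) :
    convectiveDeriv (fun _ y => y) (fun x _ => -x) (fun x y => ω (x ^ 2 + y ^ 2)) x y = 0 := by
  simp only [convectiveDeriv]
  rw [(hasDerivAt_comp_sq_add hω).deriv, (hasDerivAt_comp_add_sq hω).deriv]
  ring

theorem stmt_18_general (hf : HasPartialDerivsAt f x y)
    (hrot : convectiveDeriv (fun _ y => y) (fun x _ => -x) f x y = 0) :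
    let u₁ : 𝕜 → 𝕜 → 𝕜 := fun x y => f x y * y
    let u₂ : 𝕜 → 𝕜 → 𝕜 := fun x y => -(f x y * x)
    planarDivergence u₁ u₂ x y = 0 ∧
      convectiveDeriv u₁ u₂ u₁ x y = -(f x y) ^ 2 * x ∧
      convectiveDeriv u₁ u₂ u₂ x y = -(f x y) ^ 2 * y := by
  have h₁ : HasPartialDerivsAt (fun _ y : 𝕜 => y) x y := ⟨by fun_prop, by fun_prop⟩
  have h₂ : HasPartialDerivsAt (fun x _ : 𝕜 => -x) x y := ⟨by fun_prop, by fun_prop⟩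
  simp only [← mul_neg]
  rw [planarDivergence_mul hf h₁.fst h₂.snd, hrot,
    convectiveDeriv_mul_field_mul_of_eq_zero hf h₁ hrot,
    convectiveDeriv_mul_field_mul_of_eq_zero hf h₂ hrot]
  simp [planarDivergence, convectiveDeriv]

end PlanarFields

/-- For a differentiable `ω : ℝ → ℝ`, the radial swirl field
`U(x) = ω(x₁² + x₂²) (x₂, −x₁)`, i.e. `u₁(x,y) = ω(x²+y²) y`, `u₂(x,y) = −ω(x²+y²) x`,
is divergence free and its self-advection is the centripetal field
`(U·∇)U = −ω(x²+y²)² (x₁, x₂)`. -/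
theorem stmt_18 (ω : ℝ → ℝ) (hω : Differentiable ℝ ω) :
    let u₁ : ℝ → ℝ → ℝ := fun x y => ω (x ^ 2 + y ^ 2) * y
    let u₂ : ℝ → ℝ → ℝ := fun x y => -(ω (x ^ 2 + y ^ 2) * x)
    ∀ x y : ℝ,
      deriv (fun s => u₁ s y) x + deriv (fun s => u₂ x s) y = 0 ∧
      u₁ x y * deriv (fun s => u₁ s y) x + u₂ x y * deriv (fun s => u₁ x s) y =
        -(ω (x ^ 2 + y ^ 2)) ^ 2 * x ∧
      u₁ x y * deriv (fun s => u₂ s y) x + u₂ x y * deriv (fun s => u₂ x s) y =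
        -(ω (x ^ 2 + y ^ 2)) ^ 2 * y :=
  fun x y => stmt_18_general (hasPartialDerivsAt_radial (hω (x ^ 2 + y ^ 2)))
    (convectiveDeriv_rotation_radial (hω (x ^ 2 + y ^ 2)))
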